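/- Let Ω be a measurable space, Y a finite nonempty type, f : Ω → Y a measurable function, and μ, ν probability measures on Ω. Suppose c_A ∈ Y and real numbers p_A, p_B with p_A ≥ p_B satisfy μ{ω : f(ω) = c_A} ≥ p_A and μ{ω : f(ω) = c} ≤ p_B for every c ≠ c_A. If dTV(μ, ν) < (p_A − p_B)/2, then ν{ω : f(ω) = c_A} > ν{ω : f(ω) = c} for every c ≠ c_A; in particular, c_A is the unique maximizer over c ∈ Y of the function c ↦ ν{ω : f(ω) = c}. -/

import Mathlib

open MeasureTheory

/-- Total variation distance between two measures:
`dTV(μ, ν) = sup over measurable sets A of |μ(A) − ν(A)|`. -/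
noncomputable def tvDist {Ω : Type*} [MeasurableSpace Ω] (μ ν : Measure Ω) : ℝ :=
  ⨆ A : {s : Set Ω // MeasurableSet s}, |(μ A.1).toReal - (ν A.1).toReal|

section FiniteMeasure

variable {Ω : Type*} [MeasurableSpace Ω] {μ ν : Measure Ω} [IsFiniteMeasure μ] [IsFiniteMeasure ν]

variable (μ ν) in
lemma bddAbove_range_abs_measureReal_sub :
    BddAbove (Set.range fun A : {s : Set Ω // MeasurableSet s} => |μ.real A.1 - ν.real A.1|) := by
  refine ⟨max (μ.real Set.univ) (ν.real Set.univ), ?_⟩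
  rintro _ ⟨A, rfl⟩
  exact abs_sub_le_of_nonneg_of_le
    measureReal_nonneg (le_max_of_le_left (measureReal_mono (Set.subset_univ _)))
    measureReal_nonneg (le_max_of_le_right (measureReal_mono (Set.subset_univ _)))

lemma abs_measureReal_sub_le_tvDist {A : Set Ω} (hA : MeasurableSet A) :
    |μ.real A - ν.real A| ≤ tvDist μ ν :=
  le_ciSup (bddAbove_range_abs_measureReal_sub μ ν) ⟨A, hA⟩

lemma measureReal_lt_of_tvDist_lt_half_sub {A B : Set Ω}
    (hA : MeasurableSet A) (hB : MeasurableSet B)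
    (h : tvDist μ ν < (μ.real A - μ.real B) / 2) : ν.real B < ν.real A := by
  have loss_on_A : μ.real A - ν.real A ≤ tvDist μ ν :=
    (abs_sub_le_iff.1 (abs_measureReal_sub_le_tvDist hA)).1
  have gain_on_B : ν.real B - μ.real B ≤ tvDist μ ν :=
    (abs_sub_le_iff.1 (abs_measureReal_sub_le_tvDist hB)).2
  linarith

end FiniteMeasure

theorem certified_winning_tickets_general
    {Ω Y : Type*} [MeasurableSpace Ω] [MeasurableSpace Y] [MeasurableSingletonClass Y]
    {f : Ω → Y} (hf : Measurable f)
    {μ ν : Measure Ω} [IsFiniteMeasure μ] [IsFiniteMeasure ν]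
    {cA : Y} {pA pB : ℝ}
    (hA : pA ≤ μ.real (f ⁻¹' {cA})) (hB : ∀ c, c ≠ cA → μ.real (f ⁻¹' {c}) ≤ pB)
    (hTV : tvDist μ ν < (pA - pB) / 2) :
    (∀ c, c ≠ cA → ν.real (f ⁻¹' {c}) < ν.real (f ⁻¹' {cA})) ∧
      ∀ c, (∀ c', ν.real (f ⁻¹' {c'}) ≤ ν.real (f ⁻¹' {c})) → c = cA := by
  have lt_of_ne (c : Y) (hc : c ≠ cA) : ν.real (f ⁻¹' {c}) < ν.real (f ⁻¹' {cA}) := by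
    refine measureReal_lt_of_tvDist_lt_half_sub (μ := μ)
      (hf (measurableSet_singleton cA)) (hf (measurableSet_singleton c)) (hTV.trans_le ?_)
    gcongr
    exact hB c hc
  refine ⟨lt_of_ne, fun c hmax => ?_⟩
  by_contra hc
  exact (lt_of_ne c hc).not_ge (hmax cA)

theorem certified_winning_tickets
    {Ω Y : Type*} [MeasurableSpace Ω] [MeasurableSpace Y]
    [MeasurableSingletonClass Y] [Fintype Y] [Nonempty Y]
    (f : Ω → Y) (hf : Measurable f)
    (μ ν : Measure Ω) [IsProbabilityMeasure μ] [IsProbabilityMeasure ν]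
    (cA : Y) (pA pB : ℝ) (hpAB : pA ≥ pB)
    (hA : (μ {ω | f ω = cA}).toReal ≥ pA)
    (hB : ∀ c, c ≠ cA → (μ {ω | f ω = c}).toReal ≤ pB)
    (hTV : tvDist μ ν < (pA - pB) / 2) :
    (∀ c, c ≠ cA → (ν {ω | f ω = cA}).toReal > (ν {ω | f ω = c}).toReal) ∧
      (∀ c : Y, (∀ c' : Y, (ν {ω | f ω = c'}).toReal ≤ (ν {ω | f ω = c}).toReal) → c = cA) :=
  certified_winning_tickets_general hf hA hB hTV
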